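/- Let n ≥ 1 be an integer, and let L ⊆ S_n² be a ℂ-linear subspace that is closed with respect to the norm ‖·‖_{S_n²} (i.e., if f_l ∈ L, f ∈ S_n², and ‖f_l − f‖_{S_n²} → 0, then f ∈ L). Then L is invariant under multiplication by z (for every f ∈ L the function z ↦ z f(z) lies in L) if and only if L is an ideal of S_n² (for every h ∈ S_n² and f ∈ L, the product hf lies in L). In other words, the closed invariant subspaces of M_z on S_n² are exactly the closed ideals of S_n². -/

import Mathlib

/-!
Polynomials in `z` act on an `M_z`-invariant subspace, so the point is to pass from polynomials to
all of `S_n²`. In terms of Taylor coefficients `S_n²` is a weighted `ℓ²` space with weight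
`w_k = 1 + (k (k-1) ⋯ (k-n+1))²` (`memS_iff`, `normS_eq`), hence Taylor polynomials converge in
norm (`taylorPoly_tendsto`). Multiplication is jointly continuous (`exists_mul_bound`):
as `w` has polynomial growth, `w_{i+j} ≤ C (w_i + w_j)`, and `∑ 1 / w_k < ∞` because `n ≥ 1`, so
`∑_{i+j=k} w_k / (w_i w_j) ≤ 2 C ∑ 1 / w_k` uniformly in `k`, and Cauchy–Schwarz on each Cauchy
product coefficient gives the estimate (`conv_bound`). If `p_l → h` are the Taylor
polynomials, then `p_l f ∈ L` tends to `h f`, which lies in `L` by closedness.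
Conversely, `z` itself belongs to `S_n²`.
-/

open Metric Filter

/-- Taylor coefficient `a_k(f) = f^{(k)}(0)/k!`. -/
noncomputable def hardyCoeff (f : ℂ → ℂ) (k : ℕ) : ℂ :=
  iteratedDeriv k f 0 / (Nat.factorial k)

/-- `f ∈ H²`: analytic on the open unit disk with square-summable Taylor coefficients. -/
def MemH2 (f : ℂ → ℂ) : Prop :=
  AnalyticOnNhd ℂ f (ball (0 : ℂ) 1) ∧ Summable fun k => ‖hardyCoeff f k‖ ^ 2

/-- The Hardy space norm `‖f‖_{H²}`. -/
noncomputable def normH2 (f : ℂ → ℂ) : ℝ :=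
  Real.sqrt (∑' k, ‖hardyCoeff f k‖ ^ 2)

/-- `f ∈ S_n²`: `f ∈ H²` and `f^{(n)} ∈ H²`. -/
def MemS (n : ℕ) (f : ℂ → ℂ) : Prop :=
  MemH2 f ∧ MemH2 (iteratedDeriv n f)

/-- The norm `‖f‖_{S_n²} = (‖f^{(n)}‖² + ‖f‖²)^{1/2}`. -/
noncomputable def normS (n : ℕ) (f : ℂ → ℂ) : ℝ :=
  Real.sqrt (normH2 (iteratedDeriv n f) ^ 2 + normH2 f ^ 2)

/-- `f ∈ ₀S_n²`: `f ∈ S_n²` with `f^{(i)}(0) = 0` for `0 ≤ i ≤ n-1`. -/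
def Mem0S (n : ℕ) (f : ℂ → ℂ) : Prop :=
  MemS n f ∧ ∀ i < n, iteratedDeriv i f 0 = 0

/-- Complex Riemann–Liouville integral `V_n`. -/
noncomputable def Vn (n : ℕ) (f : ℂ → ℂ) (z : ℂ) : ℂ :=
  z ^ n / (Nat.factorial (n - 1)) *
    ∫ t in (0:ℝ)..1, ((1 - t : ℝ) : ℂ) ^ (n - 1) * f ((t : ℂ) * z)

/-- The operator `T_n f = z f(z) + n ∫₀^z f(w) dw`. -/
noncomputable def Tn (n : ℕ) (f : ℂ → ℂ) (z : ℂ) : ℂ :=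
  z * f z + n * (z * ∫ t in (0:ℝ)..1, f ((t : ℂ) * z))

/-- `L` is a ℂ-linear subspace of functions (contains 0, closed under addition
and scalar multiplication). -/
def IsLinSubspace (L : Set (ℂ → ℂ)) : Prop :=
  (fun _ => (0 : ℂ)) ∈ L ∧
  (∀ f ∈ L, ∀ g ∈ L, (fun z => f z + g z) ∈ L) ∧
  (∀ c : ℂ, ∀ f ∈ L, (fun z => c * f z) ∈ L)

/-- `L` is closed in `S_n²` with respect to the norm `‖·‖_{S_n²}`. -/
def IsClosedInS (n : ℕ) (L : Set (ℂ → ℂ)) : Prop :=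
  ∀ (g : ℕ → ℂ → ℂ) (f : ℂ → ℂ), (∀ l, g l ∈ L) → MemS n f →
    Filter.Tendsto (fun l => normS n (fun z => g l z - f z)) Filter.atTop (nhds 0) → f ∈ L

/-- `S` is closed in `H²` with respect to the norm `‖·‖_{H²}`. -/
def IsClosedInH2 (S : Set (ℂ → ℂ)) : Prop :=
  ∀ (g : ℕ → ℂ → ℂ) (f : ℂ → ℂ), (∀ l, g l ∈ S) → MemH2 f →
    Filter.Tendsto (fun l => normH2 (fun z => g l z - f z)) Filter.atTop (nhds 0) → f ∈ S

/-- `I` is a closed ideal of the algebra `S_n²`: a ℂ-linear subspace of `S_n²`, closed in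
the norm `‖·‖_{S_n²}`, absorbing multiplication by elements of `S_n²`. -/
def IsClosedIdealOfS (n : ℕ) (I : Set (ℂ → ℂ)) : Prop :=
  I ⊆ {f | MemS n f} ∧ IsLinSubspace I ∧ IsClosedInS n I ∧
  ∀ h : ℂ → ℂ, MemS n h → ∀ f ∈ I, (fun z => h z * f z) ∈ I

/-! ### The weight sequence -/

/-- The weight of `S_n²`: `‖f‖²_{S_n²} = ∑ k, weight n k * ‖hardyCoeff f k‖ ^ 2`, the second summand
being the square of the factor `k (k-1) ⋯ (k-n+1)` produced by the `n`-th derivative. -/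
noncomputable def weight (n k : ℕ) : ℝ := 1 + (k.descFactorial n : ℝ) ^ 2

lemma weight_pos (n k : ℕ) : 0 < weight n k := by unfold weight; positivity

lemma weight_le (n k : ℕ) : weight n k ≤ 2 * ((k : ℝ) + 1) ^ (2 * n) := by
  have h : (k.descFactorial n : ℝ) ≤ (k : ℝ) ^ n := by
    exact_mod_cast Nat.descFactorial_le_pow k n
  have h2 : (k.descFactorial n : ℝ) ^ 2 ≤ ((k : ℝ) + 1) ^ (2 * n) := by
    calc (k.descFactorial n : ℝ) ^ 2 ≤ ((k : ℝ) ^ n) ^ 2 := by gcongr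
      _ = (k : ℝ) ^ (2 * n) := by rw [← pow_mul, mul_comm]
      _ ≤ _ := by gcongr; linarith
  have h3 : (1 : ℝ) ≤ ((k : ℝ) + 1) ^ (2 * n) := one_le_pow₀ (by linarith [k.cast_nonneg (α := ℝ)])
  unfold weight; linarith

lemma le_weight (n k : ℕ) :
    ((k : ℝ) + 1) ^ (2 * n) ≤ ((n : ℝ) + 1) ^ (2 * n) * weight n k := by
  have h : (((k + 1 - n : ℕ) : ℝ)) ^ n ≤ k.descFactorial n := by
    exact_mod_cast Nat.pow_sub_le_descFactorial k n
  set m := k + 1 - n with hm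
  have hu : ((m : ℝ)) ^ (2 * n) + 1 ≤ weight n k := by
    have : ((m : ℝ) ^ n) ^ 2 ≤ (k.descFactorial n : ℝ) ^ 2 := by gcongr
    rw [← pow_mul, mul_comm] at this
    unfold weight; linarith
  -- `max m 1` also covers `k < n`, where the truncated difference `m` vanishes.
  have hk : (k : ℝ) + 1 ≤ ((n : ℝ) + 1) * (max m 1 : ℕ) := by
    have : k + 1 ≤ (n + 1) * max m 1 := by
      have h1 : k + 1 ≤ m + n := by omega
      have h2 : m ≤ max m 1 := le_max_left _ _
      have h3 : n * 1 ≤ n * max m 1 := Nat.mul_le_mul_left _ (le_max_right _ _)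
      linarith
    exact_mod_cast this
  calc ((k : ℝ) + 1) ^ (2 * n) ≤ (((n : ℝ) + 1) * (max m 1 : ℕ)) ^ (2 * n) := by gcongr
    _ = ((n : ℝ) + 1) ^ (2 * n) * ((max m 1 : ℕ) : ℝ) ^ (2 * n) := mul_pow _ _ _
    _ ≤ ((n : ℝ) + 1) ^ (2 * n) * weight n k := by
      gcongr
      refine le_trans ?_ hu
      rcases le_total m 1 with h1 | h1
      · rw [max_eq_right h1]; simp
      · rw [max_eq_left h1]; linarith

/-- The weight grows polynomially, hence is subadditive up to a constant. -/
lemma exists_weight_add_le (n : ℕ) :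
    ∃ C : ℝ, 0 ≤ C ∧ ∀ i j, weight n (i + j) ≤ C * (weight n i + weight n j) := by
  refine ⟨2 * (2 ^ (2 * n) * ((n : ℝ) + 1) ^ (2 * n)), by positivity, fun i j => ?_⟩
  have key : ((i + j : ℕ) + 1 : ℝ) ^ (2 * n) ≤
      2 ^ (2 * n) * (((i : ℝ) + 1) ^ (2 * n) + ((j : ℝ) + 1) ^ (2 * n)) := by
    push_cast
    rcases le_total (i : ℝ) j with h | h
    · calc ((i : ℝ) + j + 1) ^ (2 * n) ≤ (2 * ((j : ℝ) + 1)) ^ (2 * n) := by gcongr; linarith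
        _ = 2 ^ (2 * n) * ((j : ℝ) + 1) ^ (2 * n) := mul_pow _ _ _
        _ ≤ _ := by gcongr; linarith [show (0 : ℝ) ≤ ((i : ℝ) + 1) ^ (2 * n) by positivity]
    · calc ((i : ℝ) + j + 1) ^ (2 * n) ≤ (2 * ((i : ℝ) + 1)) ^ (2 * n) := by gcongr; linarith
        _ = 2 ^ (2 * n) * ((i : ℝ) + 1) ^ (2 * n) := mul_pow _ _ _
        _ ≤ _ := by gcongr; linarith [show (0 : ℝ) ≤ ((j : ℝ) + 1) ^ (2 * n) by positivity]
  calc weight n (i + j) ≤ 2 * ((i + j : ℕ) + 1 : ℝ) ^ (2 * n) := weight_le _ _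
    _ ≤ 2 * (2 ^ (2 * n) * (((i : ℝ) + 1) ^ (2 * n) + ((j : ℝ) + 1) ^ (2 * n))) := by gcongr
    _ ≤ 2 * (2 ^ (2 * n) * (((n : ℝ) + 1) ^ (2 * n) * weight n i +
          ((n : ℝ) + 1) ^ (2 * n) * weight n j)) := by
        gcongr <;> exact le_weight _ _
    _ = _ := by ring

lemma summable_inv_weight (n : ℕ) (hn : 1 ≤ n) : Summable fun k => (weight n k)⁻¹ := by
  have h1 : Summable fun k : ℕ => (((k + 1 : ℕ) : ℝ) ^ 2)⁻¹ :=
    (summable_nat_add_iff 1).2 (Real.summable_nat_pow_inv.2 (by norm_num))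
  refine Summable.of_nonneg_of_le (fun k => (inv_pos.2 (weight_pos n k)).le) (fun k => ?_)
    (h1.mul_left (((n : ℝ) + 1) ^ (2 * n)))
  have hw := weight_pos n k
  have h2 : ((k : ℝ) + 1) ^ 2 ≤ ((k : ℝ) + 1) ^ (2 * n) :=
    pow_le_pow_right₀ (by linarith [k.cast_nonneg (α := ℝ)]) (by omega)
  have h3 := h2.trans (le_weight n k)
  push_cast
  rw [inv_eq_one_div, ← div_eq_mul_inv, div_le_div_iff₀ hw (by positivity)]
  linarith

/-- `∑_{i+j=k} w_k / (w_i w_j)` is bounded uniformly in `k`. -/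
lemma exists_sum_weight_le (n : ℕ) (hn : 1 ≤ n) :
    ∃ K : ℝ, 0 ≤ K ∧ ∀ k, ∑ p ∈ Finset.HasAntidiagonal.antidiagonal k,
      weight n k * ((weight n p.1)⁻¹ * (weight n p.2)⁻¹) ≤ K := by
  obtain ⟨C, hC, h⟩ := exists_weight_add_le n
  have hs := summable_inv_weight n hn
  have hnn : ∀ k, 0 ≤ (weight n k)⁻¹ := fun k => (inv_pos.2 (weight_pos n k)).le
  set Z := ∑' k, (weight n k)⁻¹
  have hZ : 0 ≤ Z := tsum_nonneg hnn
  have hle : ∀ k, ∑ p ∈ Finset.HasAntidiagonal.antidiagonal k, (weight n p.1)⁻¹ ≤ Z := fun k => by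
    rw [Finset.Nat.sum_antidiagonal_eq_sum_range_succ (fun i _ => (weight n i)⁻¹)]
    exact hs.sum_le_tsum _ fun i _ => hnn i
  have hle' : ∀ k, ∑ p ∈ Finset.HasAntidiagonal.antidiagonal k, (weight n p.2)⁻¹ ≤ Z := fun k => by
    rw [← Finset.Nat.sum_antidiagonal_swap]
    exact hle k
  refine ⟨C * (Z + Z), by positivity, fun k => ?_⟩
  calc ∑ p ∈ Finset.HasAntidiagonal.antidiagonal k, weight n k * ((weight n p.1)⁻¹ * (weight n p.2)⁻¹)
      ≤ ∑ p ∈ Finset.HasAntidiagonal.antidiagonal k, C * ((weight n p.1)⁻¹ + (weight n p.2)⁻¹) := by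
        refine Finset.sum_le_sum fun p hp => ?_
        have hi := weight_pos n p.1
        have hj := weight_pos n p.2
        calc weight n k * ((weight n p.1)⁻¹ * (weight n p.2)⁻¹)
            ≤ (C * (weight n p.1 + weight n p.2)) * ((weight n p.1)⁻¹ * (weight n p.2)⁻¹) := by
              gcongr
              rw [← Finset.HasAntidiagonal.mem_antidiagonal.1 hp]
              exact h _ _
          _ = _ := by field_simp; ring
    _ = C * (∑ p ∈ Finset.HasAntidiagonal.antidiagonal k, (weight n p.1)⁻¹ +
          ∑ p ∈ Finset.HasAntidiagonal.antidiagonal k, (weight n p.2)⁻¹) := by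
        rw [← Finset.mul_sum, Finset.sum_add_distrib]
    _ ≤ C * (Z + Z) := by gcongr <;> simp only [hle, hle']

/-! ### Weighted convolution -/

/-- Submultiplicativity of a weighted `ℓ²` norm under convolution: by Cauchy–Schwarz,
`w_k |c_k|² ≤ (∑ w_k / (w_i w_j)) (∑ w_i |a_i|² w_j |b_j|²)`, both sums being over `i + j = k`. -/
lemma conv_bound {w : ℕ → ℝ} (hw : ∀ k, 0 < w k) {K : ℝ}
    (hK : ∀ k, ∑ p ∈ Finset.HasAntidiagonal.antidiagonal k,
      w k * ((w p.1)⁻¹ * (w p.2)⁻¹) ≤ K) {a b : ℕ → ℂ}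
    (ha : Summable fun k => w k * ‖a k‖ ^ 2) (hb : Summable fun k => w k * ‖b k‖ ^ 2) :
    (Summable fun k =>
      w k * ‖∑ p ∈ Finset.HasAntidiagonal.antidiagonal k, a p.1 * b p.2‖ ^ 2) ∧
    ∑' k, w k * ‖∑ p ∈ Finset.HasAntidiagonal.antidiagonal k, a p.1 * b p.2‖ ^ 2 ≤
      K * ((∑' k, w k * ‖a k‖ ^ 2) * ∑' k, w k * ‖b k‖ ^ 2) := by
  have hA : ∀ k, 0 ≤ w k * ‖a k‖ ^ 2 := fun k => mul_nonneg (hw k).le (by positivity)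
  have hB : ∀ k, 0 ≤ w k * ‖b k‖ ^ 2 := fun k => mul_nonneg (hw k).le (by positivity)
  have hAB := ha.mul_of_nonneg hb hA hB
  have hS := summable_sum_mul_antidiagonal_of_summable_mul
    (f := fun k => w k * ‖a k‖ ^ 2) (g := fun k => w k * ‖b k‖ ^ 2) hAB
  have hbound : ∀ k,
      w k * ‖∑ p ∈ Finset.HasAntidiagonal.antidiagonal k, a p.1 * b p.2‖ ^ 2 ≤
      K * ∑ p ∈ Finset.HasAntidiagonal.antidiagonal k,
        (w p.1 * ‖a p.1‖ ^ 2) * (w p.2 * ‖b p.2‖ ^ 2) := fun k => by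
    set T := ∑ p ∈ Finset.HasAntidiagonal.antidiagonal k,
      (w p.1 * ‖a p.1‖ ^ 2) * (w p.2 * ‖b p.2‖ ^ 2) with hT
    have hT0 : 0 ≤ T := Finset.sum_nonneg fun p _ => mul_nonneg (hA _) (hB _)
    have cs : (∑ p ∈ Finset.HasAntidiagonal.antidiagonal k, ‖a p.1‖ * ‖b p.2‖) ^ 2 ≤
        (∑ p ∈ Finset.HasAntidiagonal.antidiagonal k, (w p.1)⁻¹ * (w p.2)⁻¹) * T := by
      refine Finset.sum_sq_le_sum_mul_sum_of_sq_le_mul _ (fun p _ => ?_) (fun p _ => ?_)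
        fun p _ => le_of_eq ?_
      · exact mul_nonneg (inv_pos.2 (hw _)).le (inv_pos.2 (hw _)).le
      · exact mul_nonneg (hA _) (hB _)
      · have hi := (hw p.1).ne'
        have hj := (hw p.2).ne'
        field_simp
    have hnorm : ‖∑ p ∈ Finset.HasAntidiagonal.antidiagonal k, a p.1 * b p.2‖ ≤
        ∑ p ∈ Finset.HasAntidiagonal.antidiagonal k, ‖a p.1‖ * ‖b p.2‖ :=
      (norm_sum_le _ _).trans_eq (Finset.sum_congr rfl fun p _ => norm_mul _ _)
    have hsq := (pow_le_pow_left₀ (norm_nonneg _) hnorm 2).trans cs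
    refine (mul_le_mul_of_nonneg_left hsq (hw k).le).trans ?_
    rw [← mul_assoc]
    refine mul_le_mul_of_nonneg_right ?_ hT0
    rw [Finset.mul_sum]
    exact hK k
  have hc : Summable fun k =>
      w k * ‖∑ p ∈ Finset.HasAntidiagonal.antidiagonal k, a p.1 * b p.2‖ ^ 2 :=
    Summable.of_nonneg_of_le (fun k => mul_nonneg (hw k).le (by positivity)) hbound
      (hS.mul_left K)
  refine ⟨hc, (hc.tsum_le_tsum hbound (hS.mul_left K)).trans_eq ?_⟩
  rw [tsum_mul_left, ha.tsum_mul_tsum_eq_tsum_sum_antidiagonal hb hAB]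

/-! ### `S_n²` in terms of Taylor coefficients -/

lemma analyticAt_zero {f : ℂ → ℂ} (hf : AnalyticOnNhd ℂ f (ball (0 : ℂ) 1)) :
    AnalyticAt ℂ f 0 := hf 0 (by simp)

/-- The Leibniz rule, as the Cauchy product formula. -/
lemma hardyCoeff_mul {f g : ℂ → ℂ} (hf : AnalyticAt ℂ f 0) (hg : AnalyticAt ℂ g 0) (k : ℕ) :
    hardyCoeff (fun z => f z * g z) k =
      ∑ p ∈ Finset.HasAntidiagonal.antidiagonal k, hardyCoeff f p.1 * hardyCoeff g p.2 := by
  rw [Finset.Nat.sum_antidiagonal_eq_sum_range_succ (fun i j => hardyCoeff f i * hardyCoeff g j)]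
  unfold hardyCoeff
  rw [iteratedDeriv_fun_mul hf.contDiffAt hg.contDiffAt, Finset.sum_div]
  refine Finset.sum_congr rfl fun i hi => ?_
  rw [Nat.cast_choose ℂ (Nat.lt_succ_iff.1 (Finset.mem_range.1 hi))]
  have h1 : (k.factorial : ℂ) ≠ 0 := by exact_mod_cast k.factorial_ne_zero
  have h2 : (i.factorial : ℂ) ≠ 0 := by exact_mod_cast i.factorial_ne_zero
  have h3 : ((k - i).factorial : ℂ) ≠ 0 := by exact_mod_cast (k - i).factorial_ne_zero
  field_simp

lemma hardyCoeff_sub {f g : ℂ → ℂ} (hf : AnalyticAt ℂ f 0) (hg : AnalyticAt ℂ g 0) (k : ℕ) :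
    hardyCoeff (fun z => f z - g z) k = hardyCoeff f k - hardyCoeff g k := by
  unfold hardyCoeff
  rw [iteratedDeriv_fun_sub hf.contDiffAt hg.contDiffAt, sub_div]

lemma hardyCoeff_poly (a : ℕ → ℂ) (l k : ℕ) :
    hardyCoeff (fun z => ∑ i ∈ Finset.range l, a i * z ^ i) k = if k < l then a k else 0 := by
  have h1 : (k.factorial : ℂ) ≠ 0 := by exact_mod_cast k.factorial_ne_zero
  unfold hardyCoeff
  rw [iteratedDeriv_fun_sum (fun i _ => by fun_prop), Finset.sum_div]
  have h : ∀ i, iteratedDeriv k (fun z : ℂ => a i * z ^ i) 0 / k.factorial =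
      if k = i then a i else 0 := fun i => by
    rw [iteratedDeriv_const_mul_field, iteratedDeriv_fun_pow_zero]
    split_ifs with hk
    · subst hk; field_simp
    · simp
  simp only [h, Finset.sum_ite_eq, Finset.mem_range]

lemma hardyCoeff_iteratedDeriv (f : ℂ → ℂ) (n k : ℕ) :
    hardyCoeff (iteratedDeriv n f) k = (k + n).descFactorial n * hardyCoeff f (k + n) := by
  have h : iteratedDeriv k (iteratedDeriv n f) = iteratedDeriv (k + n) f := by
    simp only [iteratedDeriv_eq_iterate, Function.iterate_add_apply]
  have hfac : (k.factorial : ℂ) * (k + n).descFactorial n = (k + n).factorial := by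
    have := Nat.factorial_mul_descFactorial (Nat.le_add_left n k)
    rw [Nat.add_sub_cancel] at this
    exact_mod_cast this
  have h1 : (k.factorial : ℂ) ≠ 0 := by exact_mod_cast k.factorial_ne_zero
  have h2 : ((k + n).factorial : ℂ) ≠ 0 := by exact_mod_cast (k + n).factorial_ne_zero
  unfold hardyCoeff
  rw [h, div_eq_iff h1, ← mul_div_assoc, div_mul_eq_mul_div, eq_div_iff h2, ← hfac]
  ring

/-- The shift by `n` in the coefficients of the `n`-th derivative is undone for free, because
`k.descFactorial n = 0` for `k < n`. -/
lemma hasSum_deriv_iff (n : ℕ) (f : ℂ → ℂ) (s : ℝ) :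
    HasSum (fun k => ‖hardyCoeff (iteratedDeriv n f) k‖ ^ 2) s ↔
      HasSum (fun k => (k.descFactorial n : ℝ) ^ 2 * ‖hardyCoeff f k‖ ^ 2) s := by
  have h := hasSum_nat_add_iff' (f := fun k => (k.descFactorial n : ℝ) ^ 2 * ‖hardyCoeff f k‖ ^ 2)
    (g := s) n
  rw [Finset.sum_eq_zero, sub_zero] at h
  · rw [← h]
    simp only [hardyCoeff_iteratedDeriv, norm_mul, mul_pow, Complex.norm_natCast]
  · intro i hi
    rw [Nat.descFactorial_of_lt (Finset.mem_range.1 hi)]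
    simp

lemma memS_iff (n : ℕ) (f : ℂ → ℂ) :
    MemS n f ↔ AnalyticOnNhd ℂ f (ball (0 : ℂ) 1) ∧
      Summable fun k => weight n k * ‖hardyCoeff f k‖ ^ 2 := by
  constructor
  · rintro ⟨⟨hf, h0⟩, -, hs⟩
    obtain ⟨s, hs⟩ := hs
    refine ⟨hf, (h0.add ((hasSum_deriv_iff n f s).1 hs).summable).congr fun k => ?_⟩
    unfold weight; ring
  · rintro ⟨hf, hs⟩
    have h0 : Summable fun k => ‖hardyCoeff f k‖ ^ 2 :=
      Summable.of_nonneg_of_le (fun k => by positivity) (fun k => by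
        unfold weight
        nlinarith [mul_nonneg (sq_nonneg (k.descFactorial n : ℝ)) (sq_nonneg ‖hardyCoeff f k‖)]) hs
    have h1 : Summable fun k => (k.descFactorial n : ℝ) ^ 2 * ‖hardyCoeff f k‖ ^ 2 :=
      (hs.sub h0).congr fun k => by unfold weight; ring
    exact ⟨⟨hf, h0⟩, iteratedDeriv_eq_iterate (f := f) (n := n) ▸ hf.iterated_deriv n,
      ((hasSum_deriv_iff n f _).2 h1.hasSum).summable⟩

lemma normS_eq {n : ℕ} {f : ℂ → ℂ} (hf : MemS n f) :
    normS n f = Real.sqrt (∑' k, weight n k * ‖hardyCoeff f k‖ ^ 2) := by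
  obtain ⟨⟨-, h0⟩, -, hs⟩ := hf
  have h1 := (hasSum_deriv_iff n f _).1 hs.hasSum
  unfold normS normH2
  rw [Real.sq_sqrt (tsum_nonneg fun k => by positivity),
    Real.sq_sqrt (tsum_nonneg fun k => by positivity), ← h1.tsum_eq, ← h1.summable.tsum_add h0]
  congr 2
  ext k
  unfold weight; ring

/-! ### Multiplication and polynomial approximation in `S_n²` -/

/-- `S_n²` is an algebra and its multiplication is jointly continuous. -/
lemma exists_mul_bound (n : ℕ) (hn : 1 ≤ n) :
    ∃ K : ℝ, 0 ≤ K ∧ ∀ f g : ℂ → ℂ, MemS n f → MemS n g →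
      MemS n (fun z => f z * g z) ∧ normS n (fun z => f z * g z) ≤ K * (normS n f * normS n g) := by
  obtain ⟨K, hK, h⟩ := exists_sum_weight_le n hn
  refine ⟨Real.sqrt K, Real.sqrt_nonneg _, fun f g hf hg => ?_⟩
  have hf' := (memS_iff n f).1 hf
  have hg' := (memS_iff n g).1 hg
  obtain ⟨h1, h2⟩ := conv_bound (weight_pos n) h hf'.2 hg'.2
  simp only [← hardyCoeff_mul (analyticAt_zero hf'.1) (analyticAt_zero hg'.1)] at h1 h2
  have hm : MemS n (fun z => f z * g z) := (memS_iff n _).2 ⟨hf'.1.mul hg'.1, h1⟩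
  refine ⟨hm, ?_⟩
  have hnn : ∀ f : ℂ → ℂ, 0 ≤ ∑' k, weight n k * ‖hardyCoeff f k‖ ^ 2 := fun f =>
    tsum_nonneg fun k => mul_nonneg (weight_pos n k).le (by positivity)
  rw [normS_eq hm, normS_eq hf, normS_eq hg, ← Real.sqrt_mul (hnn f), ← Real.sqrt_mul hK]
  exact Real.sqrt_le_sqrt h2

lemma memS_poly (n : ℕ) (a : ℕ → ℂ) (l : ℕ) :
    MemS n (fun z => ∑ i ∈ Finset.range l, a i * z ^ i) := by
  refine (memS_iff n _).2 ⟨?_, summable_of_ne_finset_zero (s := Finset.range l) fun k hk => ?_⟩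
  · intro z _
    fun_prop
  · rw [hardyCoeff_poly, if_neg (by simpa using hk)]
    simp

/-- The Taylor polynomials of `h ∈ S_n²` converge to `h` in `S_n²`. -/
lemma taylorPoly_tendsto {n : ℕ} {h : ℂ → ℂ} (hh : MemS n h) :
    (∀ l, MemS n (fun z => ∑ i ∈ Finset.range l, hardyCoeff h i * z ^ i - h z)) ∧
    Tendsto (fun l => normS n (fun z => ∑ i ∈ Finset.range l, hardyCoeff h i * z ^ i - h z))
      atTop (nhds 0) := by
  have hh' := (memS_iff n h).1 hh
  have hcoeff : ∀ l k, hardyCoeff (fun z => ∑ i ∈ Finset.range l, hardyCoeff h i * z ^ i - h z) k =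
      if k < l then 0 else -hardyCoeff h k := fun l k => by
    rw [hardyCoeff_sub (analyticAt_zero ((memS_iff n _).1 (memS_poly n _ l)).1)
      (analyticAt_zero hh'.1), hardyCoeff_poly]
    split_ifs <;> simp
  have hmem : ∀ l, MemS n (fun z => ∑ i ∈ Finset.range l, hardyCoeff h i * z ^ i - h z) :=
    fun l => by
      refine (memS_iff n _).2 ⟨((memS_iff n _).1 (memS_poly n _ l)).1.sub hh'.1, ?_⟩
      refine Summable.of_nonneg_of_le (fun k => mul_nonneg (weight_pos n k).le (by positivity))
        (fun k => ?_) hh'.2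
      have := (weight_pos n k).le
      rw [hcoeff]
      split_ifs
      · simp; positivity
      · simp
  refine ⟨hmem, ?_⟩
  have htail : ∀ l, normS n (fun z => ∑ i ∈ Finset.range l, hardyCoeff h i * z ^ i - h z) =
      Real.sqrt (∑' k, weight n (k + l) * ‖hardyCoeff h (k + l)‖ ^ 2) := fun l => by
    rw [normS_eq (hmem l), ← ((memS_iff n _).1 (hmem l)).2.sum_add_tsum_nat_add l,
      Finset.sum_eq_zero, zero_add]
    · simp [hcoeff]
    · intro i hi
      rw [hcoeff, if_pos (Finset.mem_range.1 hi)]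
      simp
  simp only [htail]
  simpa using (tendsto_sum_nat_add fun k => weight n k * ‖hardyCoeff h k‖ ^ 2).sqrt

lemma poly_mul_mem {L : Set (ℂ → ℂ)} (hL : IsLinSubspace L)
    (hz : ∀ f ∈ L, (fun z => z * f z) ∈ L) {f : ℂ → ℂ} (hf : f ∈ L) (a : ℕ → ℂ) (l : ℕ) :
    (fun z => (∑ i ∈ Finset.range l, a i * z ^ i) * f z) ∈ L := by
  have hpow : ∀ i : ℕ, (fun z => z ^ i * f z) ∈ L := fun i => by
    induction i with
    | zero => simpa using hf
    | succ i ih => simpa only [pow_succ', mul_assoc] using hz _ ih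
  induction l with
  | zero => simpa using hL.1
  | succ l ih =>
    have := hL.2.1 _ ih _ (hL.2.2 (a l) _ (hpow l))
    simpa only [Finset.sum_range_succ, add_mul, mul_assoc] using this

/-- Let `L ⊆ S_n²` be a ℂ-linear subspace closed in the norm `‖·‖_{S_n²}`.
Then `L` is invariant under multiplication by `z` iff `L` is an ideal of `S_n²`: the closed
invariant subspaces of `M_z` on `S_n²` are exactly the closed ideals of `S_n²`. -/
theorem stmt14 (n : ℕ) (hn : 1 ≤ n) (L : Set (ℂ → ℂ))
    (hLsub : L ⊆ {f | MemS n f}) (hLlin : IsLinSubspace L) (hLclosed : IsClosedInS n L) :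
    (∀ f ∈ L, (fun z => z * f z) ∈ L) ↔
    (∀ h : ℂ → ℂ, MemS n h → ∀ f ∈ L, (fun z => h z * f z) ∈ L) := by
  constructor
  · intro hz h hh f hf
    obtain ⟨K, -, hmul⟩ := exists_mul_bound n hn
    obtain ⟨hmem, hlim⟩ := taylorPoly_tendsto hh
    refine hLclosed (fun l z => (∑ i ∈ Finset.range l, hardyCoeff h i * z ^ i) * f z) _
      (poly_mul_mem hLlin hz hf _) (hmul h f hh (hLsub hf)).1 ?_
    simp only [← sub_mul]
    refine squeeze_zero (fun l => Real.sqrt_nonneg _)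
      (fun l => (hmul _ f (hmem l) (hLsub hf)).2) ?_
    simpa using (hlim.mul_const (normS n f)).const_mul K
  · intro hid f hf
    refine hid (fun z => z) ?_ f hf
    -- `z` is the polynomial of length 2 with coefficients `a_i = i`.
    simpa [Finset.sum_range_succ] using memS_poly n (fun i => (i : ℂ)) 2
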